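/- For each integer k ≥ 0 and u > 0, let B_k(u) = e^{−u} Σ_{m=0}^∞ (u^m/m!)·m^k denote the k-th Bell (exponential) polynomial, equal to the k-th moment of a Poisson random variable with mean u. Then (k,u) ↦ B_k(u) is strictly totally positive of order infinity: for every r ≥ 1, all integers k₁ > k₂ > ⋯ > k_r ≥ 0, and all reals u₁ > u₂ > ⋯ > u_r > 0, the r×r determinant det( (B_{k_i}(u_j))_{i,j=1}^r ) is strictly positive. -/

import Mathlib

/-- The `k`-th Bell (exponential) polynomial evaluated at `u`:
`B_k(u) = e^{−u} Σ_{m=0}^∞ (u^m/m!) m^k`, the `k`-th moment of a Poisson distribution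
with mean `u` (with the convention `0^0 = 1`). -/
noncomputable def bellPoly (k : ℕ) (u : ℝ) : ℝ :=
  Real.exp (-u) * ∑' m : ℕ, u ^ m / (Nat.factorial m : ℝ) * (m : ℝ) ^ k

/-!
The series for `B_k(u)` exhibits the Bell kernel, up to the positive factor `e^{-u}`, as the
composition over `m ∈ ℕ` of the kernels `(k, m) ↦ m ^ k` and `(m, u) ↦ u ^ m / m!`. By the
Cauchy–Binet formula each minor of a composition is a sum of products of minors of the factors, so
it suffices that the factors are totally positive and that one product is positive.

Both factors come from the exponential kernel `(a, t) ↦ e^{at}`. By Rolle's theorem a nonzero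
combination of `n` exponentials has fewer than `n` real zeros, so the minors of this kernel do not
vanish; deforming the exponents to `0, 1, …, n - 1`, where the minor is a Vandermonde determinant,
shows that they are positive.
-/

open Filter Finset Topology
open scoped NNReal Nat

section CauchyBinet

variable {m n R : Type*} [Fintype n] [DecidableEq n] [CommRing R]

lemma det_mul_eq_sum_prod_mul_det_submatrix [Fintype m] (A : Matrix n m R) (B : Matrix m n R) :
    (A * B).det = ∑ f : n → m, (∏ i, B (f i) i) * (A.submatrix id f).det := by
  simp only [Matrix.det_apply', Matrix.mul_apply, prod_univ_sum, Fintype.piFinset_univ, mul_sum]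
  rw [sum_comm]
  simp only [Matrix.submatrix_apply, id_eq, prod_mul_distrib]
  exact sum_congr rfl fun f _ => sum_congr rfl fun σ _ => by ring

-- Summing over all maps instead of increasing ones counts each minor `(card n)!` times; in return
-- the index type needs no order.
theorem factorial_card_mul_det_mul [Fintype m] (A : Matrix n m R) (B : Matrix m n R) :
    ((Fintype.card n)! : R) * (A * B).det =
      ∑ f : n → m, (A.submatrix id f).det * (B.submatrix f id).det := by
  have reindex (σ : Equiv.Perm n) : (A * B).det =
      ∑ f : n → m, (A.submatrix id f).det * (Equiv.Perm.sign σ * ∏ i, B (f (σ i)) i) := by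
    rw [det_mul_eq_sum_prod_mul_det_submatrix, ← (σ.symm.arrowCongr (Equiv.refl m)).sum_comp]
    refine sum_congr rfl fun f _ => ?_
    have := (A.submatrix id f).det_permute' σ
    rw [Matrix.submatrix_submatrix, Function.comp_id] at this
    change (∏ i, B (f (σ i)) i) * (A.submatrix id (f ∘ σ)).det = _
    rw [this]
    ring
  calc ((Fintype.card n)! : R) * (A * B).det = ∑ _σ : Equiv.Perm n, (A * B).det := by
        rw [sum_const, card_univ, Fintype.card_perm, nsmul_eq_mul]
    _ = ∑ σ : Equiv.Perm n, ∑ f : n → m,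
          (A.submatrix id f).det * (Equiv.Perm.sign σ * ∏ i, B (f (σ i)) i) :=
        sum_congr rfl fun σ _ => reindex σ
    _ = ∑ f : n → m, (A.submatrix id f).det * (B.submatrix f id).det := by
        rw [sum_comm]
        simp only [← mul_sum, Matrix.det_apply', Matrix.submatrix_apply, id_eq]

lemma det_submatrix_comp_perm_mul (A : Matrix n m R) (B : Matrix m n R) (f : n → m)
    (σ : Equiv.Perm n) :
    (A.submatrix id (f ∘ σ)).det * (B.submatrix (f ∘ σ) id).det =
      (A.submatrix id f).det * (B.submatrix f id).det := by
  have hA := (A.submatrix id f).det_permute' σ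
  have hB := (B.submatrix f id).det_permute σ
  rw [Matrix.submatrix_submatrix, Function.comp_id] at hA hB
  have sign_sq : ((Equiv.Perm.sign σ : ℤ) : R) * (Equiv.Perm.sign σ : ℤ) = 1 := by
    rw [← Int.cast_mul, Int.units_coe_mul_self, Int.cast_one]
  rw [hA, hB, mul_mul_mul_comm, sign_sq, one_mul]

end CauchyBinet

section MinorProducts

variable {X : Type*} [LinearOrder X] {n : ℕ}

lemma minor_mul_minor_nonneg_of_strictMono {R : Type*} [CommRing R] [Preorder R]
    {A : Matrix (Fin n) X R} {B : Matrix X (Fin n) R}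
    (h : ∀ f : Fin n → X, StrictMono f →
      0 ≤ (A.submatrix id f).det * (B.submatrix f id).det) (f : Fin n → X) :
    0 ≤ (A.submatrix id f).det * (B.submatrix f id).det := by
  by_cases hf : Function.Injective f
  · rw [← det_submatrix_comp_perm_mul A B f (Tuple.sort f)]
    exact h _ ((Tuple.monotone_sort f).strictMono_of_injective (hf.comp (Equiv.injective _)))
  · obtain ⟨i, j, hij, hne⟩ := Function.not_injective_iff.mp hf
    have hA : (A.submatrix id f).det = 0 :=
      Matrix.det_zero_of_column_eq hne fun k => by simp only [Matrix.submatrix_apply, hij]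
    rw [hA, zero_mul]

variable {A : Matrix (Fin n) X ℝ} {B : Matrix X (Fin n) ℝ} {C : Matrix (Fin n) (Fin n) ℝ}

theorem minor_mul_minor_le_factorial_mul_det_of_hasSum
    (hC : ∀ i j, HasSum (fun x => A i x * B x j) (C i j))
    (h : ∀ f : Fin n → X, StrictMono f →
      0 ≤ (A.submatrix id f).det * (B.submatrix f id).det) (f : Fin n → X) :
    (A.submatrix id f).det * (B.submatrix f id).det ≤ n ! * C.det := by
  let partialSum (s : Finset X) : Matrix (Fin n) (Fin n) ℝ :=
    A.submatrix id ((↑) : s → X) * B.submatrix ((↑) : s → X) id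
  have tendsto_partialSum : Tendsto partialSum atTop (𝓝 C) := by
    refine tendsto_pi_nhds.2 fun i => tendsto_pi_nhds.2 fun j => (hC i j).congr fun s => ?_
    exact (sum_coe_sort s fun x => A i x * B x j).symm
  have tendsto_det : Tendsto (fun s => (n ! : ℝ) * (partialSum s).det) atTop (𝓝 (n ! * C.det)) :=
    ((continuous_id.matrix_det.tendsto C).comp tendsto_partialSum).const_mul _
  refine ge_of_tendsto tendsto_det ?_
  filter_upwards [eventually_ge_atTop (univ.image f)] with s hs
  have hfs (i : Fin n) : f i ∈ s := hs (mem_image_of_mem f (mem_univ i))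
  have cauchyBinet := factorial_card_mul_det_mul (A.submatrix id ((↑) : s → X))
    (B.submatrix ((↑) : s → X) id)
  rw [Fintype.card_fin] at cauchyBinet
  rw [cauchyBinet]
  exact single_le_sum (f := fun g : Fin n → s =>
      (A.submatrix id fun i => (g i : X)).det * (B.submatrix (fun i => (g i : X)) id).det)
    (fun g _ => minor_mul_minor_nonneg_of_strictMono h _) (mem_univ fun i => ⟨f i, hfs i⟩)

end MinorProducts

section TotalPositivity

variable {α β γ δ X : Type*} [Preorder α] [Preorder β] [Preorder γ] [Preorder δ] [LinearOrder X]

/-- Total positivity of infinite order: all minors of the kernel `K`, with rows and columns taken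
in increasing order, are nonnegative. -/
def IsTotallyPositive (K : α → β → ℝ) : Prop :=
  ∀ ⦃n : ℕ⦄ ⦃a : Fin n → α⦄ ⦃b : Fin n → β⦄, StrictMono a → StrictMono b →
    0 ≤ (Matrix.of fun i j => K (a i) (b j)).det

/-- Strict total positivity of infinite order: all minors of the kernel `K`, with rows and columns
taken in increasing order, are positive. -/
def IsStrictlyTotallyPositive (K : α → β → ℝ) : Prop :=
  ∀ ⦃n : ℕ⦄ ⦃a : Fin n → α⦄ ⦃b : Fin n → β⦄, StrictMono a → StrictMono b →
    0 < (Matrix.of fun i j => K (a i) (b j)).det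

lemma IsTotallyPositive.comp {K : α → β → ℝ} (hK : IsTotallyPositive K) {f : γ → α} {g : δ → β}
    (hf : StrictMono f) (hg : StrictMono g) : IsTotallyPositive fun c d => K (f c) (g d) :=
  fun _ _ _ ha hb => hK (hf.comp ha) (hg.comp hb)

namespace IsStrictlyTotallyPositive

variable {K : α → β → ℝ}

lemma comp (hK : IsStrictlyTotallyPositive K) {f : γ → α} {g : δ → β}
    (hf : StrictMono f) (hg : StrictMono g) : IsStrictlyTotallyPositive fun c d => K (f c) (g d) :=
  fun _ _ _ ha hb => hK (hf.comp ha) (hg.comp hb)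

lemma mul_rows (hK : IsStrictlyTotallyPositive K) {c : α → ℝ} (hc : ∀ a, 0 < c a) :
    IsStrictlyTotallyPositive fun a b => c a * K a b := fun _ a b ha hb =>
  (Matrix.det_mul_column (fun i => c (a i)) (Matrix.of fun i j => K (a i) (b j))).symm ▸
    mul_pos (prod_pos fun i _ => hc (a i)) (hK ha hb)

lemma mul_cols (hK : IsStrictlyTotallyPositive K) {c : β → ℝ} (hc : ∀ b, 0 < c b) :
    IsStrictlyTotallyPositive fun a b => c b * K a b := fun _ a b ha hb =>
  (Matrix.det_mul_row (fun j => c (b j)) (Matrix.of fun i j => K (a i) (b j))).symm ▸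
    mul_pos (prod_pos fun j _ => hc (b j)) (hK ha hb)

end IsStrictlyTotallyPositive

theorem IsTotallyPositive.isStrictlyTotallyPositive_tsum_mul {K : α → X → ℝ} {L : X → β → ℝ}
    (hK : IsTotallyPositive K) (hL : IsStrictlyTotallyPositive L)
    (exists_minor_pos : ∀ {n : ℕ} {a : Fin n → α}, StrictMono a →
      ∃ f : Fin n → X, StrictMono f ∧ 0 < (Matrix.of fun i j => K (a i) (f j)).det)
    (summable : ∀ a b, Summable fun x => K a x * L x b) :
    IsStrictlyTotallyPositive fun a b => ∑' x, K a x * L x b := by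
  intro n a b ha hb
  obtain ⟨f, hf, hKf⟩ := exists_minor_pos ha
  have le_det := minor_mul_minor_le_factorial_mul_det_of_hasSum
    (A := Matrix.of fun i x => K (a i) x) (B := Matrix.of fun x j => L x (b j))
    (fun i j => (summable (a i) (b j)).hasSum)
    (fun g hg => mul_nonneg (hK ha hg) (hL hg hb).le) f
  exact pos_of_mul_pos_right ((mul_pos hKf (hL hf hb)).trans_le le_det) (Nat.cast_nonneg _)

end TotalPositivity

section ExponentialKernel

variable {n : ℕ}

lemma exists_strictMono_deriv_eq_zero {f : ℝ → ℝ} (hf : Continuous f) {t : Fin (n + 1) → ℝ}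
    (ht : StrictMono t) (hft : ∀ j, f (t j) = 0) :
    ∃ s : Fin n → ℝ, StrictMono s ∧ ∀ j, deriv f (s j) = 0 := by
  have rolle (j : Fin n) : ∃ s ∈ Set.Ioo (t j.castSucc) (t j.succ), deriv f s = 0 :=
    exists_deriv_eq_zero (ht Fin.castSucc_lt_succ) hf.continuousOn (by rw [hft, hft])
  choose s hs hderiv using rolle
  refine ⟨s, fun i j hij => ?_, hderiv⟩
  calc s i < t i.succ := (hs i).2
    _ ≤ t j.castSucc := ht.monotone (Fin.succ_le_castSucc_iff.2 hij)
    _ < s j := (hs j).1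

theorem eq_zero_of_sum_mul_exp_eq_zero {a c t : Fin n → ℝ} (ha : Function.Injective a)
    (ht : StrictMono t) (h : ∀ j, ∑ i, c i * Real.exp (a i * t j) = 0) : c = 0 := by
  induction n with
  | zero => exact Subsingleton.elim _ _
  | succ n ih =>
    -- Dividing by `exp (a 0 * x)` makes the first term constant, so differentiation removes it.
    let g (x : ℝ) : ℝ := ∑ i, c i * Real.exp ((a i - a 0) * x)
    have g_zero (j : Fin (n + 1)) : g (t j) = 0 := by
      have : g (t j) = Real.exp (-(a 0 * t j)) * ∑ i, c i * Real.exp (a i * t j) := by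
        rw [mul_sum]
        refine sum_congr rfl fun i _ => ?_
        rw [mul_left_comm, ← Real.exp_add]
        ring_nf
      rw [this, h, mul_zero]
    have g_deriv (x : ℝ) : deriv g x =
        ∑ i : Fin n, c i.succ * (a i.succ - a 0) * Real.exp ((a i.succ - a 0) * x) := by
      have : HasDerivAt g (∑ i, c i * (Real.exp ((a i - a 0) * x) * ((a i - a 0) * 1))) x :=
        HasDerivAt.fun_sum fun i _ => (((hasDerivAt_id x).const_mul _).exp).const_mul _
      rw [this.deriv, Fin.sum_univ_succ, sub_self, zero_mul, zero_mul, mul_zero, mul_zero, zero_add]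
      exact sum_congr rfl fun i _ => by ring
    obtain ⟨s, hs, hgs⟩ := exists_strictMono_deriv_eq_zero (by fun_prop) ht g_zero
    have tail_zero := ih (a := fun i => a i.succ - a 0) (c := fun i => c i.succ * (a i.succ - a 0))
      (fun i j hij => Fin.succ_injective n (ha (sub_left_injective hij))) hs
      fun j => (g_deriv (s j)).symm.trans (hgs j)
    have c_succ (i : Fin n) : c i.succ = 0 :=
      (mul_eq_zero.1 (congrFun tail_zero i)).resolve_right
        (sub_ne_zero.2 (ha.ne (Fin.succ_ne_zero i)))
    have c_zero : c 0 = 0 := by simpa [Fin.sum_univ_succ, c_succ] using h 0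
    exact funext (Fin.cases c_zero c_succ)

lemma det_exp_mul_ne_zero {a t : Fin n → ℝ} (ha : Function.Injective a) (ht : StrictMono t) :
    (Matrix.of fun i j => Real.exp (a i * t j)).det ≠ 0 := by
  intro hdet
  obtain ⟨c, hc, hcM⟩ := Matrix.exists_vecMul_eq_zero_iff.2 hdet
  exact hc (eq_zero_of_sum_mul_exp_eq_zero ha ht fun j => congrFun hcM j)

lemma det_exp_natCast_mul_pos {t : Fin n → ℝ} (ht : StrictMono t) :
    0 < (Matrix.of fun i j : Fin n => Real.exp ((i : ℕ) * t j)).det := by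
  have vandermonde : (Matrix.of fun i j : Fin n => Real.exp ((i : ℕ) * t j)) =
      (Matrix.vandermonde fun j => Real.exp (t j)).transpose := by
    ext i j
    exact Real.exp_nat_mul (t j) i
  rw [vandermonde, Matrix.det_transpose, Matrix.det_vandermonde]
  exact prod_pos fun i _ => prod_pos fun j hj =>
    sub_pos.2 (Real.exp_lt_exp.2 (ht (mem_Ioi.1 hj)))

lemma convex_setOf_strictMono {ι : Type*} [Preorder ι] : Convex ℝ {a : ι → ℝ | StrictMono a} := by
  intro a ha b hb p q hp hq hpq i j hij
  have := convex_Ioi (0 : ℝ) (sub_pos.2 (ha hij)) (sub_pos.2 (hb hij)) hp hq hpq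
  simp only [smul_eq_mul, Set.mem_Ioi] at this
  simp only [Pi.add_apply, Pi.smul_apply, smul_eq_mul]
  linarith

theorem isStrictlyTotallyPositive_exp_mul :
    IsStrictlyTotallyPositive fun a t : ℝ => Real.exp (a * t) := by
  intro n a t ha ht
  let minor (a : Fin n → ℝ) : ℝ := (Matrix.of fun i j => Real.exp (a i * t j)).det
  have minor_continuous : Continuous minor :=
    Continuous.matrix_det (continuous_matrix fun i j => by simp only [Matrix.of_apply]; fun_prop)
  have natCast_strictMono : StrictMono fun i : Fin n => ((i : ℕ) : ℝ) :=
    Nat.strictMono_cast.comp Fin.val_strictMono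
  by_contra! minor_nonpos
  obtain ⟨a', ha', minor_eq_zero⟩ :=
    convex_setOf_strictMono.isPreconnected.intermediate_value ha natCast_strictMono
      minor_continuous.continuousOn ⟨minor_nonpos, (det_exp_natCast_mul_pos ht).le⟩
  exact det_exp_mul_ne_zero (StrictMono.injective ha') ht minor_eq_zero

end ExponentialKernel

section PowerKernel

theorem isStrictlyTotallyPositive_pow :
    IsStrictlyTotallyPositive fun (k : ℕ) (x : Set.Ioi (0 : ℝ)) => (x : ℝ) ^ k := by
  have pow_eq_exp (k : ℕ) (x : Set.Ioi (0 : ℝ)) : (x : ℝ) ^ k = Real.exp (k * Real.log x) := by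
    rw [Real.exp_nat_mul, Real.exp_log x.2]
  simp only [pow_eq_exp]
  exact isStrictlyTotallyPositive_exp_mul.comp Nat.strictMono_cast
    Real.strictMonoOn_log.strictMono

theorem isTotallyPositive_pow : IsTotallyPositive fun (k : ℕ) (x : ℝ≥0) => (x : ℝ) ^ k := by
  intro n k x hk hx
  let minor (ε : ℝ) : ℝ := (Matrix.of fun i j => ((x j : ℝ) + ε) ^ k i).det
  have minor_continuous : Continuous minor :=
    Continuous.matrix_det (continuous_matrix fun i j => by simp only [Matrix.of_apply]; fun_prop)
  have minor_tendsto : Tendsto minor (𝓝[>] 0) (𝓝 (Matrix.of fun i j => (x j : ℝ) ^ k i).det) := by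
    simpa only [minor, add_zero] using (minor_continuous.tendsto 0).mono_left nhdsWithin_le_nhds
  refine ge_of_tendsto minor_tendsto ?_
  filter_upwards [self_mem_nhdsWithin] with ε hε
  exact (isStrictlyTotallyPositive_pow hk
    (b := fun j => ⟨x j + ε, add_pos_of_nonneg_of_pos (x j).2 hε⟩)
    fun _ _ hij => add_lt_add_left (NNReal.coe_lt_coe.2 (hx hij)) ε).le

end PowerKernel

lemma summable_pow_mul_pow_div_factorial (k : ℕ) (u : ℝ) :
    Summable fun m : ℕ => (m : ℝ) ^ k * ((m ! : ℝ)⁻¹ * u ^ m) := by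
  have pow_le (m : ℕ) : (m : ℝ) ^ k ≤ k ! * Real.exp 1 ^ m := by
    have := Real.pow_div_factorial_le_exp (m : ℝ) m.cast_nonneg k
    rwa [div_le_iff₀' (by positivity), ← mul_one (m : ℝ), Real.exp_nat_mul, mul_one] at this
  refine .of_norm_bounded
    ((Real.summable_pow_div_factorial (Real.exp 1 * |u|)).mul_left (k ! : ℝ)) fun m => ?_
  calc ‖(m : ℝ) ^ k * ((m ! : ℝ)⁻¹ * u ^ m)‖ = (m : ℝ) ^ k * ((m ! : ℝ)⁻¹ * |u| ^ m) := by
        simp only [norm_mul, norm_pow, norm_inv, RCLike.norm_natCast, Real.norm_eq_abs]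
    _ ≤ k ! * Real.exp 1 ^ m * ((m ! : ℝ)⁻¹ * |u| ^ m) := by gcongr; exact pow_le m
    _ = k ! * ((Real.exp 1 * |u|) ^ m / m !) := by ring

theorem isStrictlyTotallyPositive_bellPoly :
    IsStrictlyTotallyPositive fun (k : ℕ) (u : Set.Ioi (0 : ℝ)) => bellPoly k u := by
  have pow_totallyPositive : IsTotallyPositive fun k m : ℕ => (m : ℝ) ^ k :=
    isTotallyPositive_pow.comp strictMono_id Nat.strictMono_cast
  have poisson_strict : IsStrictlyTotallyPositive
      fun (m : ℕ) (u : Set.Ioi (0 : ℝ)) => (m ! : ℝ)⁻¹ * (u : ℝ) ^ m :=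
    isStrictlyTotallyPositive_pow.mul_rows fun m => by positivity
  -- `m ^ k` vanishes at `m = 0` for `k ≠ 0`, so the positive minors are taken at nodes `m + 1`.
  have succ_pow_strict : IsStrictlyTotallyPositive fun k m : ℕ => ((m + 1 : ℕ) : ℝ) ^ k :=
    isStrictlyTotallyPositive_pow.comp strictMono_id
      (g := fun m : ℕ => ⟨((m + 1 : ℕ) : ℝ), Set.mem_Ioi.2 (Nat.cast_pos.2 m.succ_pos)⟩)
      fun _ _ hlt => Subtype.mk_lt_mk.2 (Nat.cast_lt.2 (Nat.succ_lt_succ hlt))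
  have exists_minor_pos {n : ℕ} {k : Fin n → ℕ} (hk : StrictMono k) :
      ∃ f : Fin n → ℕ, StrictMono f ∧ 0 < (Matrix.of fun i j => (f j : ℝ) ^ k i).det :=
    ⟨fun j => j + 1, fun _ _ hlt => Nat.succ_lt_succ hlt, succ_pow_strict hk Fin.val_strictMono⟩
  have bellPoly_eq (k : ℕ) (u : ℝ) : bellPoly k u =
      Real.exp (-u) * ∑' m : ℕ, (m : ℝ) ^ k * ((m ! : ℝ)⁻¹ * u ^ m) := by
    simp only [bellPoly, div_eq_inv_mul, mul_comm]
  simp only [bellPoly_eq]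
  exact (pow_totallyPositive.isStrictlyTotallyPositive_tsum_mul poisson_strict exists_minor_pos
    fun k u => summable_pow_mul_pow_div_factorial k u).mul_cols
      fun u => Real.exp_pos (-u)

/-- The kernel `(k,u) ↦ B_k(u)` is strictly totally positive of order
infinity: for all integers `k₁ > ⋯ > k_r ≥ 0` and reals `u₁ > ⋯ > u_r > 0`,
`det((B_{k_i}(u_j))) > 0`. -/
theorem stmt_14 :
    ∀ r : ℕ, 1 ≤ r → ∀ (k : Fin r → ℕ) (u : Fin r → ℝ),
      (∀ i j : Fin r, i < j → k j < k i) →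
      (∀ j : Fin r, 0 < u j) →
      (∀ i j : Fin r, i < j → u j < u i) →
      0 < Matrix.det (Matrix.of fun i j : Fin r => bellPoly (k i) (u j)) := by
  intro r _ k u hk u_pos hu
  rw [← Matrix.det_submatrix_equiv_self Fin.revPerm]
  exact isStrictlyTotallyPositive_bellPoly
    (a := fun i => k i.rev) (b := fun j => ⟨u j.rev, u_pos j.rev⟩)
    (fun _ _ hij => hk _ _ (Fin.rev_lt_rev.2 hij)) (fun _ _ hij => hu _ _ (Fin.rev_lt_rev.2 hij))
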